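/- arXiv:1311.6624 — 2 statements merged into one kernel-verified Lean document; each statement's English description precedes it below -/
import Mathlib

section
/- Let n ≥ 2 and let L(D) be a cocanceling homogeneous linear differential operator from E to F on ℝⁿ (i.e. the intersection over nonzero ξ of ker L(ξ) is {0}). If f ∈ L¹(ℝⁿ; E) is integrable, compactly supported, and satisfies L(D) f = 0 in the sense of distributions, then ∫_{ℝⁿ} f = 0. -/
open MeasureTheory

/-- If `L(D)` is a cocanceling homogeneous linear differential operator of
order `k` from `E` to `F` on `ℝⁿ` (`n ≥ 2`), given by constant coefficients
`c m ∈ Hom(E, F)` indexed by tuples of directions `m : Fin k → Fin n`, with symbol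
`L(ξ) = ∑ₘ (∏ᵢ ξ_{m i}) c m` satisfying `⋂_{ξ ≠ 0} ker L(ξ) = {0}`, and if
`f ∈ L¹(ℝⁿ; E)` is compactly supported and satisfies `L(D) f = 0` in the sense of
distributions, then `∫_{ℝⁿ} f = 0`. -/
theorem stmt2 (n k : ℕ) (hn : 2 ≤ n) {E F : Type*}
    [NormedAddCommGroup E] [NormedSpace ℝ E] [FiniteDimensional ℝ E]
    [NormedAddCommGroup F] [NormedSpace ℝ F] [FiniteDimensional ℝ F]
    (c : (Fin k → Fin n) → (E →ₗ[ℝ] F))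
    (L : (Fin n → ℝ) → (E →ₗ[ℝ] F))
    (hL : ∀ ξ, L ξ = ∑ m : Fin k → Fin n, (∏ i, ξ (m i)) • c m)
    (hcoc : (⨅ ξ ∈ {ξ : Fin n → ℝ | ξ ≠ 0}, LinearMap.ker (L ξ)) = ⊥)
    (f : (Fin n → ℝ) → E) (hf : Integrable f volume) (hsupp : HasCompactSupport f)
    (hLf : ∀ φ : (Fin n → ℝ) → ℝ, ContDiff ℝ (⊤ : ℕ∞) φ → HasCompactSupport φ →
      ∀ w : Module.Dual ℝ F,
        ∑ m : Fin k → Fin n,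
          ∫ x, iteratedFDeriv ℝ k φ x (fun i => Pi.single (m i) (1 : ℝ)) *
            w (c m (f x)) = 0) :
    ∫ x, f x = 0 := by
  have key : ∀ ξ : Fin n → ℝ, L ξ (∫ x, f x) = 0 := by
    intro ξ
    obtain ⟨R, hR⟩ := hsupp.isCompact.isBounded.subset_closedBall (0 : Fin n → ℝ)
    have hR0 : (0 : ℝ) < max R 0 + 1 := by positivity
    let b : ContDiffBump (0 : Fin n → ℝ) := ⟨max R 0 + 1, max R 0 + 2, hR0, by linarith⟩
    let l : (Fin n → ℝ) →L[ℝ] ℝ := ∑ i, ξ i • ContinuousLinearMap.proj (R := ℝ) (φ := fun _ : Fin n => ℝ) i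
    have hl : ∀ j, l (Pi.single j 1) = ξ j := by
      intro j
      simp [l, Pi.single_apply]
    let g : ℝ → ℝ := fun t => t ^ k
    have hg : ContDiff ℝ (⊤ : ℕ∞) g := contDiff_id.pow k
    have hder : ∀ x (m : Fin k → Fin n), iteratedFDeriv ℝ k (g ∘ l) x
        (fun i => Pi.single (m i) (1 : ℝ)) = (∏ i, ξ (m i)) * (k.factorial : ℝ) := by
      intro x m
      rw [ContinuousLinearMap.iteratedFDeriv_comp_right l hg x (i := k)
        (by exact_mod_cast le_top)]
      rw [ContinuousMultilinearMap.compContinuousLinearMap_apply,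
        iteratedFDeriv_apply_eq_iteratedDeriv_mul_prod]
      simp only [hl, smul_eq_mul]
      congr 1
      simp only [g, iteratedDeriv_eq_iterate]
      rw [iter_deriv_pow]
      have hp : ∀ q : ℕ, ∏ i ∈ Finset.range q, ((q : ℝ) - (i : ℝ)) = (q.factorial : ℝ) := by
        intro q
        induction q with
        | zero => simp
        | succ q ih =>
          rw [Finset.prod_range_succ', Nat.factorial_succ]
          push_cast
          simp only [add_sub_add_right_eq_sub, ih]
          ring
      simp [hp]
    let φ : (Fin n → ℝ) → ℝ := fun x => b x * (g ∘ l) x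
    have hφ : ContDiff ℝ (⊤ : ℕ∞) φ := b.contDiff.mul (hg.comp l.contDiff)
    have hφc : HasCompactSupport φ := b.hasCompactSupport.mul_right
    have hfi : ∀ x m (w : Module.Dual ℝ F), iteratedFDeriv ℝ k φ x
        (fun i => Pi.single (m i) (1 : ℝ)) * w (c m (f x)) =
        ((∏ i, ξ (m i)) * (k.factorial : ℝ)) * w (c m (f x)) := by
      intro x m w
      by_cases hx : f x = 0
      · simp [hx]
      · have hxR : x ∈ Metric.ball (0 : Fin n → ℝ) b.rIn := by
          have h1 := hR (subset_tsupport f hx)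
          rw [Metric.mem_closedBall] at h1
          rw [Metric.mem_ball]
          change dist x 0 < max R 0 + 1
          linarith [le_max_left R 0]
        have he : φ =ᶠ[nhds x] (g ∘ l) := by
          filter_upwards [b.eventuallyEq_one_of_mem_ball hxR] with y hy
          simp [φ, hy]
        rw [(he.iteratedFDeriv ℝ k).eq_of_nhds, hder]
    rw [← Module.forall_dual_apply_eq_zero_iff ℝ]
    intro w
    have h := hLf φ hφ hφc w
    simp only [hfi, integral_const_mul] at h
    have hint : ∀ m, ∫ x, w (c m (f x)) = w (c m (∫ x, f x)) := fun m =>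
      (LinearMap.toContinuousLinearMap (w.comp (c m))).integral_comp_comm hf
    simp only [hint] at h
    have hk : (k.factorial : ℝ) ≠ 0 := by exact_mod_cast k.factorial_ne_zero
    have h2 : (k.factorial : ℝ) * w (L ξ (∫ x, f x)) = 0 := by
      rw [← h, hL]
      simp only [LinearMap.sum_apply, LinearMap.smul_apply, map_sum, map_smul, smul_eq_mul,
        Finset.mul_sum]
      exact Finset.sum_congr rfl fun m _ => by ring
    exact (mul_eq_zero.mp h2).resolve_left hk
  have : (∫ x, f x) ∈ (⨅ ξ ∈ {ξ : Fin n → ℝ | ξ ≠ 0}, LinearMap.ker (L ξ)) := by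
    simp only [Submodule.mem_iInf, LinearMap.mem_ker]
    exact fun ξ _ => key ξ
  rw [hcoc] at this
  exact (Submodule.mem_bot ℝ).mp this
end

section
/- Let n ≥ 2. There exists C > 0 such that for every f ∈ C_c^∞(ℝⁿ; ℝⁿ) with div f = 0 and every φ ∈ C_c^∞(ℝⁿ; ℝⁿ), one has |∫_{ℝⁿ} f · φ| ≤ C ‖f‖_{L¹(ℝⁿ)} ‖Dφ‖_{Lⁿ(ℝⁿ)}. -/
open MeasureTheory

/-- Hölder for real integrals, in geometric mean form. -/
lemma aux_holder {α : Type*} [MeasurableSpace α] {μ : Measure α} {a b : α → ℝ}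
    (ha : Integrable a μ) (hb : Integrable b μ) (ha0 : ∀ x, 0 ≤ a x) (hb0 : ∀ x, 0 ≤ b x)
    {p q : ℝ} (hp : 0 ≤ p) (hq : 0 ≤ q) (hpq : p + q = 1) :
    Integrable (fun x => a x ^ p * b x ^ q) μ ∧
    ∫ x, a x ^ p * b x ^ q ∂μ ≤ (∫ x, a x ∂μ) ^ p * (∫ x, b x ∂μ) ^ q := by
  have hm : AEStronglyMeasurable (fun x => a x ^ p * b x ^ q) μ :=
    ((ha.aemeasurable.pow_const p).mul (hb.aemeasurable.pow_const q)).aestronglyMeasurable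
  have h0 : ∀ x, 0 ≤ a x ^ p * b x ^ q := fun x =>
    mul_nonneg (Real.rpow_nonneg (ha0 x) _) (Real.rpow_nonneg (hb0 x) _)
  have key := ENNReal.lintegral_mul_norm_pow_le (μ := μ) (f := fun x => ENNReal.ofReal (a x))
    (g := fun x => ENNReal.ofReal (b x)) ha.aemeasurable.ennreal_ofReal
    hb.aemeasurable.ennreal_ofReal hp hq hpq
  have e : ∀ x, ENNReal.ofReal (a x) ^ p * ENNReal.ofReal (b x) ^ q
      = ENNReal.ofReal (a x ^ p * b x ^ q) := fun x => by
    rw [ENNReal.ofReal_mul (Real.rpow_nonneg (ha0 x) _), ENNReal.ofReal_rpow_of_nonneg (ha0 x) hp,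
      ENNReal.ofReal_rpow_of_nonneg (hb0 x) hq]
  simp_rw [e] at key
  rw [← ofReal_integral_eq_lintegral_ofReal ha (.of_forall ha0),
    ← ofReal_integral_eq_lintegral_ofReal hb (.of_forall hb0),
    ENNReal.ofReal_rpow_of_nonneg (integral_nonneg ha0) hp,
    ENNReal.ofReal_rpow_of_nonneg (integral_nonneg hb0) hq,
    ← ENNReal.ofReal_mul (Real.rpow_nonneg (integral_nonneg ha0) _)] at key
  have hint : Integrable (fun x => a x ^ p * b x ^ q) μ := by
    refine ⟨hm, ?_⟩
    rw [hasFiniteIntegral_iff_ofReal (.of_forall h0)]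
    exact key.trans_lt ENNReal.ofReal_lt_top
  refine ⟨hint, ?_⟩
  rw [← ofReal_integral_eq_lintegral_ofReal hint (.of_forall h0)] at key
  exact (ENNReal.ofReal_le_ofReal_iff (mul_nonneg (Real.rpow_nonneg (integral_nonneg ha0) _)
    (Real.rpow_nonneg (integral_nonneg hb0) _))).1 key

lemma aux_avg {m : ℕ} {u : (Fin m → ℝ) → ℝ} (hu : Continuous u) (hc : HasCompactSupport u)
    (hu0 : ∀ x, 0 ≤ u x) (x : Fin m → ℝ) {s : ℝ} (hs : 0 < s) :
    ∫ z in Set.Icc (0 : Fin m → ℝ) 1, u (x + s • z) ≤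
      s ^ (((m : ℝ) + 1)⁻¹ - 1) * (∫ y, u y ^ ((m : ℝ) + 1)) ^ (((m : ℝ) + 1)⁻¹) := by
  have hm1 : (0 : ℝ) < (m : ℝ) + 1 := by positivity
  have hup : Continuous (fun y => u y ^ ((m : ℝ) + 1)) :=
    hu.rpow_const (fun _ => Or.inr hm1.le)
  have hcp : HasCompactSupport (fun y => u y ^ ((m : ℝ) + 1)) :=
    hc.comp_left (g := fun r : ℝ => r ^ ((m : ℝ) + 1)) (Real.zero_rpow hm1.ne')
  have hint : Integrable (fun y => u y ^ ((m : ℝ) + 1)) := hup.integrable_of_hasCompactSupport hcp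
  have hint2 : Integrable (fun z : Fin m → ℝ => u (x + s • z) ^ ((m : ℝ) + 1)) :=
    (hint.comp_add_left x).comp_smul (R := s) hs.ne'
  have hval : ∫ z : Fin m → ℝ, u (x + s • z) ^ ((m : ℝ) + 1)
      = (s ^ m)⁻¹ * ∫ y, u y ^ ((m : ℝ) + 1) := by
    have := Measure.integral_comp_smul (volume : Measure (Fin m → ℝ))
      (fun y => u (x + y) ^ ((m : ℝ) + 1)) s
    rw [this, integral_add_left_eq_self (fun y => u y ^ ((m : ℝ) + 1)) x]
    simp [abs_of_pos hs]
  have hvol : volume.real (Set.Icc (0 : Fin m → ℝ) 1) = 1 := by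
    simp [Measure.real, Real.volume_Icc_pi]
  have hfin : IsFiniteMeasure (volume.restrict (Set.Icc (0 : Fin m → ℝ) 1)) :=
    ⟨by simp [Real.volume_Icc_pi]⟩
  have H := (aux_holder (μ := volume.restrict (Set.Icc (0 : Fin m → ℝ) 1))
    (a := fun z => u (x + s • z) ^ ((m : ℝ) + 1)) (b := fun _ => 1)
    hint2.integrableOn (integrable_const _) (fun z => Real.rpow_nonneg (hu0 _) _)
    (fun _ => zero_le_one) (p := ((m : ℝ) + 1)⁻¹) (q := 1 - ((m : ℝ) + 1)⁻¹)
    (by positivity) (by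
      have : ((m : ℝ) + 1)⁻¹ ≤ 1 := inv_le_one_of_one_le₀ (by linarith [(Nat.cast_nonneg m : (0:ℝ) ≤ m)])
      linarith) (by ring)).2
  have e1 : ∀ z, (u (x + s • z) ^ ((m : ℝ) + 1)) ^ ((m : ℝ) + 1)⁻¹ = u (x + s • z) := fun z =>
    Real.rpow_rpow_inv (hu0 _) hm1.ne'
  simp only [e1, Real.one_rpow, mul_one] at H
  have h1 : ∫ z in Set.Icc (0 : Fin m → ℝ) 1, (1 : ℝ) = 1 := by
    rw [setIntegral_const, hvol]; simp
  rw [h1, Real.one_rpow, mul_one] at H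
  refine H.trans ?_
  have h2 : ∫ z in Set.Icc (0 : Fin m → ℝ) 1, u (x + s • z) ^ ((m : ℝ) + 1)
      ≤ (s ^ m)⁻¹ * ∫ y, u y ^ ((m : ℝ) + 1) := by
    rw [← hval]
    exact setIntegral_le_integral hint2 (.of_forall fun z => Real.rpow_nonneg (hu0 _) _)
  have hI : 0 ≤ ∫ y, u y ^ ((m : ℝ) + 1) := integral_nonneg fun z => Real.rpow_nonneg (hu0 _) _
  refine (Real.rpow_le_rpow (integral_nonneg fun z => Real.rpow_nonneg (hu0 _) _) h2
    (by positivity)).trans ?_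
  rw [Real.mul_rpow (by positivity) hI]
  refine le_of_eq ?_
  congr 1
  rw [← Real.rpow_natCast, ← Real.rpow_neg hs.le, ← Real.rpow_mul hs.le]
  congr 1
  field_simp
  ring

/-- Approximation by cube averages: a Morrey type estimate. -/
lemma aux_approx {m : ℕ} {ψ : (Fin m → ℝ) → ℝ} (hψ : ContDiff ℝ 1 ψ)
    (hc : HasCompactSupport ψ) {ε : ℝ} (hε : 0 < ε) :
    ∃ χ : (Fin m → ℝ) → ℝ, Differentiable ℝ χ ∧
      (∀ x, |ψ x - χ x| ≤ ((m : ℝ) + 1) * ε ^ (((m : ℝ) + 1)⁻¹) *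
        (∫ y, ‖fderiv ℝ ψ y‖ ^ ((m : ℝ) + 1)) ^ (((m : ℝ) + 1)⁻¹)) ∧
      (∀ x, ‖fderiv ℝ χ x‖ ≤ ε ^ (((m : ℝ) + 1)⁻¹ - 1) *
        (∫ y, ‖fderiv ℝ ψ y‖ ^ ((m : ℝ) + 1)) ^ (((m : ℝ) + 1)⁻¹)) := by
  set A := (∫ y, ‖fderiv ℝ ψ y‖ ^ ((m : ℝ) + 1)) ^ (((m : ℝ) + 1)⁻¹) with hA
  have hm1 : (0 : ℝ) < (m : ℝ) + 1 := by positivity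
  have hA0 : 0 ≤ A := Real.rpow_nonneg (integral_nonneg fun z => by positivity) _
  set μ := volume.restrict (Set.Icc (0 : Fin m → ℝ) 1) with hμ
  have hfin : IsFiniteMeasure μ := ⟨by simp [μ, Real.volume_Icc_pi]⟩
  have hvol : volume.real (Set.Icc (0 : Fin m → ℝ) 1) = 1 := by
    simp [Measure.real, Real.volume_Icc_pi]
  have hD : Continuous (fderiv ℝ ψ) := hψ.continuous_fderiv (by simp)
  have hcD : HasCompactSupport (fderiv ℝ ψ) := hc.fderiv ℝ
  obtain ⟨M, hM⟩ := hcD.exists_bound_of_continuous hD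
  have hψd : ∀ y, HasFDerivAt ψ (fderiv ℝ ψ y) y := fun y =>
    (hψ.differentiable (by simp) y).hasFDerivAt
  have hav : ∀ x {s : ℝ}, 0 < s → ∫ z, ‖fderiv ℝ ψ (x + s • z)‖ ∂μ ≤
      s ^ (((m : ℝ) + 1)⁻¹ - 1) * A := fun x s hs =>
    aux_avg (u := fun y => ‖fderiv ℝ ψ y‖) hD.norm hcD.norm (fun _ => norm_nonneg _) x hs
  have hiψ : ∀ x (s : ℝ), Integrable (fun z => ψ (x + s • z)) μ := fun x s =>
    (hψ.continuous.comp (by fun_prop : Continuous fun z : Fin m → ℝ => x + s • z)).continuousOn.integrableOn_compact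
      isCompact_Icc
  have hiD : ∀ x (s : ℝ), Integrable (fun z => fderiv ℝ ψ (x + s • z)) μ := fun x s =>
    (hD.comp (by fun_prop : Continuous fun z : Fin m → ℝ => x + s • z)).continuousOn.integrableOn_compact
      isCompact_Icc
  have hz : ∀ᵐ z ∂μ, ‖z‖ ≤ 1 := by
    filter_upwards [ae_restrict_mem measurableSet_Icc] with z hz
    rw [pi_norm_le_iff_of_nonneg zero_le_one]
    intro j
    have h1 := hz.1 j
    have h2 := hz.2 j
    simp only [Pi.zero_apply, Pi.one_apply] at h1 h2
    rw [Real.norm_eq_abs, abs_le]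
    constructor <;> linarith
  have hχ : ∀ x, HasFDerivAt (fun x => ∫ z, ψ (x + ε • z) ∂μ)
      (∫ z, fderiv ℝ ψ (x + ε • z) ∂μ) x := by
    intro x
    refine hasFDerivAt_integral_of_dominated_of_fderiv_le (s := Set.univ) (bound := fun _ => M)
      (F := fun x z => ψ (x + ε • z)) (F' := fun x z => fderiv ℝ ψ (x + ε • z))
      Filter.univ_mem
      (.of_forall fun y => (hiψ y ε).aestronglyMeasurable) (hiψ x ε) (hiD x ε).aestronglyMeasurable
      (.of_forall fun z y _ => hM _) (integrable_const _) (.of_forall fun z y _ => ?_)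
    simpa [Function.comp_def] using (hψd (y + ε • z)).comp y ((hasFDerivAt_id y).add_const (ε • z))
  refine ⟨fun x => ∫ z, ψ (x + ε • z) ∂μ, fun x => (hχ x).differentiableAt, ?_, ?_⟩
  · intro x
    set h : ℝ → ℝ := fun s => ∫ z, ψ (x + s • z) ∂μ with hh
    have hd : ∀ s, HasDerivAt h (∫ z, fderiv ℝ ψ (x + s • z) z ∂μ) s := by
      intro s
      refine (hasDerivAt_integral_of_dominated_loc_of_deriv_le (s := Set.univ) (bound := fun _ => M)
        (F := fun s z => ψ (x + s • z)) (F' := fun s z => fderiv ℝ ψ (x + s • z) z)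
        Filter.univ_mem
        (.of_forall fun y => (hiψ x y).aestronglyMeasurable) (hiψ x s) ?_
        ?_ (integrable_const _) (.of_forall fun z y _ => ?_)).2
      · exact Continuous.aestronglyMeasurable (by fun_prop)
      · filter_upwards [hz] with z hz y _
        refine ((fderiv ℝ ψ (x + y • z)).le_opNorm z).trans ?_
        have := hM (x + y • z)
        nlinarith [norm_nonneg (fderiv ℝ ψ (x + y • z)), norm_nonneg z]
      · have h1 : HasDerivAt (fun y : ℝ => x + y • z) z y := by
          simpa using ((hasDerivAt_id y).smul_const z).const_add x
        exact (hψd (x + y • z)).comp_hasDerivAt y h1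
    have hb : ∀ s, 0 < s → |∫ z, fderiv ℝ ψ (x + s • z) z ∂μ| ≤ s ^ (((m : ℝ) + 1)⁻¹ - 1) * A := by
      intro s hs
      refine le_trans ?_ (hav x hs)
      rw [← Real.norm_eq_abs]
      refine norm_integral_le_of_norm_le (hiD x s).norm ?_
      filter_upwards [hz] with z hz
      refine ((fderiv ℝ ψ (x + s • z)).le_opNorm z).trans ?_
      nlinarith [norm_nonneg (fderiv ℝ ψ (x + s • z)), norm_nonneg z]
    set B : ℝ → ℝ := fun s => ((m : ℝ) + 1) * s ^ (((m : ℝ) + 1)⁻¹) * A with hB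
    have hBc : Continuous B := by
      have : Continuous fun s : ℝ => s ^ (((m : ℝ) + 1)⁻¹) :=
        Real.continuous_rpow_const (by positivity)
      fun_prop
    have hBd : ∀ s, 0 < s → HasDerivAt B (s ^ (((m : ℝ) + 1)⁻¹ - 1) * A) s := by
      intro s hs
      have := ((Real.hasDerivAt_rpow_const (x := s) (p := ((m : ℝ) + 1)⁻¹)
        (Or.inl hs.ne')).const_mul ((m : ℝ) + 1)).mul_const A
      rwa [mul_inv_cancel_left₀ hm1.ne'] at this
    have hhc : Continuous h := continuous_iff_continuousAt.2 fun s => (hd s).continuousAt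
    have h0 : h 0 = ψ x := by
      simp [h, μ, hvol]
    have hB0 : B 0 = 0 := by
      simp [B, Real.zero_rpow (inv_ne_zero hm1.ne')]
    have mono1 : MonotoneOn (fun s => B s - h s) (Set.Ici 0) := by
      refine monotoneOn_of_deriv_nonneg (convex_Ici 0) (hBc.sub hhc).continuousOn ?_ ?_
      · intro s hs
        rw [interior_Ici] at hs
        exact ((hBd s hs).sub (hd s)).differentiableAt.differentiableWithinAt
      · intro s hs
        rw [interior_Ici] at hs
        have e := ((hBd s hs).sub (hd s)).deriv
        have := abs_le.1 (hb s hs)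
        refine le_of_le_of_eq ?_ e.symm
        linarith
    have mono2 : MonotoneOn (fun s => B s + h s) (Set.Ici 0) := by
      refine monotoneOn_of_deriv_nonneg (convex_Ici 0) (hBc.add hhc).continuousOn ?_ ?_
      · intro s hs
        rw [interior_Ici] at hs
        exact ((hBd s hs).add (hd s)).differentiableAt.differentiableWithinAt
      · intro s hs
        rw [interior_Ici] at hs
        have e := ((hBd s hs).add (hd s)).deriv
        have := abs_le.1 (hb s hs)
        refine le_of_le_of_eq ?_ e.symm
        linarith
    have a1 := mono1 (Set.mem_Ici.2 le_rfl) (Set.mem_Ici.2 hε.le) hε.le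
    have a2 := mono2 (Set.mem_Ici.2 le_rfl) (Set.mem_Ici.2 hε.le) hε.le
    simp only [h0, hB0] at a1 a2
    change |ψ x - h ε| ≤ B ε
    rw [abs_le]
    constructor <;> linarith
  · intro x
    rw [(hχ x).fderiv]
    exact (norm_integral_le_integral_norm _).trans (hav x hε)

/-- The inclusion of the hyperplane `x_i = 0`. -/
noncomputable def auxJ {m : ℕ} (i : Fin (m + 1)) : (Fin m → ℝ) →L[ℝ] (Fin (m + 1) → ℝ) :=
  LinearMap.toContinuousLinearMap
    { toFun := fun y => i.insertNth (α := fun _ => ℝ) 0 y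
      map_add' := by
        intro x y
        ext j
        refine Fin.succAboveCases i ?_ (fun k => ?_) j <;> simp
      map_smul' := by
        intro c y
        ext j
        refine Fin.succAboveCases i ?_ (fun k => ?_) j <;> simp }

/-- The point with `i`-th coordinate `t` and remaining coordinates `y`. -/
noncomputable def auxIns {m : ℕ} (i : Fin (m + 1)) (t : ℝ) (y : Fin m → ℝ) : Fin (m + 1) → ℝ :=
  t • Pi.single i 1 + auxJ i y

lemma auxJ_same {m : ℕ} (i : Fin (m + 1)) (y : Fin m → ℝ) : auxJ i y i = 0 := by
  simp [auxJ]

lemma auxJ_succ {m : ℕ} (i : Fin (m + 1)) (y : Fin m → ℝ) (k : Fin m) :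
    auxJ i y (i.succAbove k) = y k := by
  simp [auxJ]

lemma auxIns_same {m : ℕ} (i : Fin (m + 1)) (t : ℝ) (y : Fin m → ℝ) : auxIns i t y i = t := by
  simp [auxIns, auxJ_same]

lemma auxIns_succ {m : ℕ} (i : Fin (m + 1)) (t : ℝ) (y : Fin m → ℝ) (k : Fin m) :
    auxIns i t y (i.succAbove k) = y k := by
  simp [auxIns, auxJ_succ]

lemma auxIns_eq {m : ℕ} (i : Fin (m + 1)) (t : ℝ) (y : Fin m → ℝ) :
    auxIns i t y = i.insertNth (α := fun _ => ℝ) t y := by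
  ext j
  refine Fin.succAboveCases i ?_ (fun k => ?_) j <;> simp [auxIns_same, auxIns_succ]

lemma auxJ_norm {m : ℕ} (i : Fin (m + 1)) : ‖auxJ i‖ ≤ 1 := by
  refine ContinuousLinearMap.opNorm_le_bound _ zero_le_one fun y => ?_
  rw [one_mul, pi_norm_le_iff_of_nonneg (norm_nonneg _)]
  intro j
  refine Fin.succAboveCases i ?_ (fun k => ?_) j
  · simp [auxJ_same]
  · rw [auxJ_succ]; exact norm_le_pi_norm y k

lemma auxJ_single {m : ℕ} (i : Fin (m + 1)) (k : Fin m) :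
    auxJ i (Pi.single k 1) = Pi.single (i.succAbove k) 1 := by
  ext j
  refine Fin.succAboveCases i ?_ (fun l => ?_) j
  · rw [auxJ_same, Pi.single_eq_of_ne (Fin.succAbove_ne i k).symm]
  · rw [auxJ_succ]
    by_cases h : l = k
    · subst h; simp
    · rw [Pi.single_eq_of_ne h, Pi.single_eq_of_ne (by simpa using h)]

lemma auxIns_norm {m : ℕ} (i : Fin (m + 1)) (t : ℝ) (y : Fin m → ℝ) : ‖y‖ ≤ ‖auxIns i t y‖ := by
  rw [pi_norm_le_iff_of_nonneg (norm_nonneg _)]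
  intro k
  rw [← auxIns_succ i t y k]
  exact norm_le_pi_norm _ _

lemma auxIns_norm' {m : ℕ} (i : Fin (m + 1)) (t : ℝ) (y : Fin m → ℝ) : |t| ≤ ‖auxIns i t y‖ := by
  have := norm_le_pi_norm (auxIns i t y) i
  rwa [auxIns_same] at this

lemma auxIns_cont {m : ℕ} (i : Fin (m + 1)) (t : ℝ) : Continuous (auxIns i t) := by
  unfold auxIns; fun_prop

lemma auxIns_hasFDerivAt {m : ℕ} (i : Fin (m + 1)) (t : ℝ) (y : Fin m → ℝ) :
    HasFDerivAt (auxIns i t) (auxJ i) y := by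
  unfold auxIns
  exact (auxJ i).hasFDerivAt.const_add _

lemma auxIns_hasDerivAt {m : ℕ} (i : Fin (m + 1)) (t : ℝ) (y : Fin m → ℝ) :
    HasDerivAt (fun t => auxIns i t y) (Pi.single i 1) t := by
  unfold auxIns
  simpa using ((hasDerivAt_id t).smul_const (Pi.single i (1 : ℝ) : Fin (m + 1) → ℝ)).add_const (auxJ i y)

/-- Slices of compactly supported functions are compactly supported. -/
lemma aux_slice_supp {m : ℕ} {E : Type*} [NormedAddCommGroup E] (i : Fin (m + 1))
    {h : (Fin (m + 1) → ℝ) → E} (hc : HasCompactSupport h) (t : ℝ) :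
    HasCompactSupport (fun y => h (auxIns i t y)) := by
  obtain ⟨R, hR⟩ := hc.isCompact.isBounded.subset_closedBall 0
  refine HasCompactSupport.of_support_subset_isCompact (isCompact_closedBall (0 : Fin m → ℝ) R) ?_
  intro y hy
  have := hR (subset_tsupport _ hy)
  rw [mem_closedBall_zero_iff] at this ⊢
  exact (auxIns_norm i t y).trans this

lemma aux_slice_int {m : ℕ} {E : Type*} [NormedAddCommGroup E] (i : Fin (m + 1))
    {h : (Fin (m + 1) → ℝ) → E} (hh : Continuous h) (hc : HasCompactSupport h) (t : ℝ) :
    Integrable (fun y => h (auxIns i t y)) :=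
  (hh.comp (auxIns_cont i t)).integrable_of_hasCompactSupport (aux_slice_supp i hc t)

lemma aux_fubini {m : ℕ} (i : Fin (m + 1)) {h : (Fin (m + 1) → ℝ) → ℝ} (hh : Integrable h) :
    Integrable (fun t => ∫ y, h (auxIns i t y)) ∧
      ∫ t, ∫ y, h (auxIns i t y) = ∫ x, h x := by
  have mp := (volume_preserving_piFinSuccAbove (fun _ : Fin (m + 1) => ℝ) i).symm
  have e : ∀ p : ℝ × (Fin m → ℝ),
      (MeasurableEquiv.piFinSuccAbove (fun _ : Fin (m + 1) => ℝ) i).symm p = auxIns i p.1 p.2 := by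
    intro p
    rw [auxIns_eq]; rfl
  have h1 : Integrable (fun p : ℝ × (Fin m → ℝ) => h (auxIns i p.1 p.2))
      ((volume : Measure ℝ).prod volume) := by
    have := (mp.integrable_comp_emb (MeasurableEquiv.measurableEmbedding _) (g := h)).2 hh
    rw [← Measure.volume_eq_prod]
    simpa only [Function.comp_def, e] using this
  refine ⟨h1.integral_prod_left, ?_⟩
  rw [← mp.integral_comp' h, Measure.volume_eq_prod]
  simp_rw [e]
  rw [integral_prod _ h1]

lemma aux_fubini_prod {m : ℕ} (i : Fin (m + 1)) {h : (Fin (m + 1) → ℝ) → ℝ} (hh : Continuous h)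
    (hc : HasCompactSupport h) :
    Integrable (fun t => ∫ y, h (auxIns i t y)) ∧
      ∫ t, ∫ y, h (auxIns i t y) = ∫ x, h x :=
  aux_fubini i (hh.integrable_of_hasCompactSupport hc)

/-- The divergence theorem step. -/
lemma aux_div {m : ℕ} (i : Fin (m + 1)) {f : (Fin (m + 1) → ℝ) → (Fin (m + 1) → ℝ)}
    (hf : ContDiff ℝ 1 f) (hc : HasCompactSupport f)
    (hdiv : ∀ x, ∑ i, fderiv ℝ f x (Pi.single i 1) i = 0)
    {χ : (Fin m → ℝ) → ℝ} (hχ : Differentiable ℝ χ) {K : ℝ} (hK : ∀ x, ‖fderiv ℝ χ x‖ ≤ K)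
    (t : ℝ) :
    |∫ y, f (auxIns i t y) i * χ y| ≤ K * ∫ x, ‖f x‖ := by
  have hD : Continuous (fderiv ℝ f) := hf.continuous_fderiv (by simp)
  have hcD : HasCompactSupport (fderiv ℝ f) := hc.fderiv ℝ
  have hfd : ∀ y, HasFDerivAt f (fderiv ℝ f y) y := fun y =>
    (hf.differentiable (by simp) y).hasFDerivAt
  have hK0 : 0 ≤ K := (norm_nonneg _).trans (hK 0)
  obtain ⟨M, hM⟩ := hcD.exists_bound_of_continuous hD
  have hM0 : 0 ≤ M := (norm_nonneg _).trans (hM 0)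
  have hDc : ∀ j k, Continuous fun x => fderiv ℝ f x (Pi.single j 1) k := fun j k => by fun_prop
  have hDs : ∀ j k, HasCompactSupport fun x => fderiv ℝ f x (Pi.single j 1) k := fun j k =>
    hcD.comp_left (g := fun L : (Fin (m + 1) → ℝ) →L[ℝ] (Fin (m + 1) → ℝ) =>
      L (Pi.single j 1) k) (by simp)
  have hfk : ∀ k, HasCompactSupport fun x => f x k := fun k =>
    hc.comp_left (g := fun v : Fin (m + 1) → ℝ => v k) (by simp)
  have hfkc : ∀ k, Continuous fun x => f x k := fun k => by
    have := hf.continuous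
    fun_prop
  have hDb : ∀ j k x, |fderiv ℝ f x (Pi.single j 1) k| ≤ M := by
    intro j k x
    refine (norm_le_pi_norm (fderiv ℝ f x (Pi.single j 1)) k).trans ?_
    refine ((fderiv ℝ f x).le_opNorm _).trans ?_
    have : ‖(Pi.single j 1 : Fin (m + 1) → ℝ)‖ = 1 := by rw [Pi.norm_single, norm_one]
    rw [this, mul_one]
    exact hM x
  obtain ⟨R, hR⟩ := hcD.isCompact.isBounded.subset_closedBall 0
  obtain ⟨R', hR'⟩ := hc.isCompact.isBounded.subset_closedBall 0
  have hχc : Continuous χ := hχ.continuous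
  have int1 : ∀ s k, Integrable fun y => f (auxIns i s y) k * χ y := fun s k =>
    (((hfkc k).comp (auxIns_cont i s)).mul hχc).integrable_of_hasCompactSupport
      ((aux_slice_supp i (hfk k) s).mul_right)
  have int2 : ∀ s j k, Integrable fun y => fderiv ℝ f (auxIns i s y) (Pi.single j 1) k * χ y :=
    fun s j k => (((hDc j k).comp (auxIns_cont i s)).mul hχc).integrable_of_hasCompactSupport
      ((aux_slice_supp i (hDs j k) s).mul_right)
  have int3 : ∀ s k l, Integrable fun y => f (auxIns i s y) k * fderiv ℝ χ y (Pi.single l 1) := by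
    intro s k l
    refine (aux_slice_int i (hfkc k) (hfk k) s).mul_bdd (c := K)
      (measurable_fderiv_apply_const ℝ χ _).aestronglyMeasurable (.of_forall fun y => ?_)
    refine ((fderiv ℝ χ y).le_opNorm _).trans ?_
    have : ‖(Pi.single l 1 : Fin m → ℝ)‖ = 1 := by rw [Pi.norm_single, norm_one]
    rw [this, mul_one]
    exact hK y
  set G : ℝ → ℝ := fun s => ∫ y, f (auxIns i s y) i * χ y with hG
  set G' : ℝ → ℝ := fun s => ∫ y, fderiv ℝ f (auxIns i s y) (Pi.single i 1) i * χ y with hG'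
  have hd : ∀ s, HasDerivAt G (G' s) s := by
    intro s
    refine (hasDerivAt_integral_of_dominated_loc_of_deriv_le (s := Set.univ)
      (bound := (Metric.closedBall (0 : Fin m → ℝ) R).indicator fun y => M * |χ y|)
      (F := fun s y => f (auxIns i s y) i * χ y)
      (F' := fun s y => fderiv ℝ f (auxIns i s y) (Pi.single i 1) i * χ y)
      Filter.univ_mem
      (.of_forall fun s => (int1 s i).aestronglyMeasurable) (int1 s i)
      (int2 s i i).aestronglyMeasurable
      (.of_forall fun y s _ => ?_) ?_ (.of_forall fun y s _ => ?_)).2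
    · by_cases hy : y ∈ Metric.closedBall (0 : Fin m → ℝ) R
      · rw [Set.indicator_of_mem hy, norm_mul]
        exact mul_le_mul_of_nonneg_right (hDb i i _) (abs_nonneg _)
      · rw [Set.indicator_of_notMem hy]
        have : fderiv ℝ f (auxIns i s y) = 0 := by
          by_contra hne
          have := hR (subset_tsupport _ hne)
          rw [mem_closedBall_zero_iff] at this hy
          exact hy ((auxIns_norm i s y).trans this)
        simp [this]
    · rw [integrable_indicator_iff Metric.isClosed_closedBall.measurableSet]
      exact (by fun_prop : Continuous fun y => M * |χ y|).continuousOn.integrableOn_compact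
        (isCompact_closedBall _ _)
    · refine HasDerivAt.mul_const ?_ _
      exact hasDerivAt_pi.1 ((hfd (auxIns i s y)).comp_hasDerivAt s (auxIns_hasDerivAt i s y)) i
  have hG'2 : ∀ s, G' s = ∫ y, ∑ k : Fin m,
      f (auxIns i s y) (i.succAbove k) * fderiv ℝ χ y (Pi.single k 1) := by
    intro s
    have e1 : ∀ k : Fin m, ∫ y, f (auxIns i s y) (i.succAbove k) * fderiv ℝ χ y (Pi.single k 1)
        = - ∫ y, fderiv ℝ f (auxIns i s y) (Pi.single (i.succAbove k) 1) (i.succAbove k) * χ y := by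
      intro k
      have hfs : ∀ y, HasFDerivAt (fun y => f (auxIns i s y) (i.succAbove k))
          ((ContinuousLinearMap.proj (R := ℝ) (φ := fun _ : Fin (m + 1) => ℝ) (i.succAbove k)).comp
            ((fderiv ℝ f (auxIns i s y)).comp (auxJ i))) y := fun y =>
        (ContinuousLinearMap.proj (R := ℝ) (φ := fun _ : Fin (m + 1) => ℝ)
          (i.succAbove k)).hasFDerivAt.comp y ((hfd _).comp y (auxIns_hasFDerivAt i s y))
      have e2 : ∀ y, fderiv ℝ (fun y => f (auxIns i s y) (i.succAbove k)) y (Pi.single k 1)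
          = fderiv ℝ f (auxIns i s y) (Pi.single (i.succAbove k) 1) (i.succAbove k) := by
        intro y
        rw [(hfs y).fderiv]
        simp [auxJ_single]
      have := integral_mul_fderiv_eq_neg_fderiv_mul_of_integrable (μ := volume) (𝕜 := ℝ)
        (f := fun y => f (auxIns i s y) (i.succAbove k)) (g := χ) (v := Pi.single k 1)
        (by simp_rw [e2]; exact int2 s _ _) (int3 s _ _) (int1 s _)
        (fun y _ => (hfs y).differentiableAt) (fun y _ => hχ y)
      rw [this]
      simp_rw [e2]
    rw [integral_finsetSum _ (fun k _ => int3 s _ k)]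
    simp_rw [e1]
    rw [Finset.sum_neg_distrib, ← integral_finsetSum _ (fun k _ => int2 s _ _), ← integral_neg]
    refine integral_congr_ae (.of_forall fun y => ?_)
    have h0 := hdiv (auxIns i s y)
    rw [Fin.sum_univ_succAbove _ i] at h0
    simp only
    rw [← Finset.sum_mul, ← neg_mul]
    congr 1
    linarith
  have hG'3 : ∀ s, |G' s| ≤ K * ∫ y, ‖f (auxIns i s y)‖ := by
    intro s
    rw [hG'2, ← integral_const_mul, ← Real.norm_eq_abs]
    refine norm_integral_le_of_norm_le
      ((aux_slice_int i hf.continuous.norm hc.norm s).const_mul K) (.of_forall fun y => ?_)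
    have e : ∑ k : Fin m, f (auxIns i s y) (i.succAbove k) * fderiv ℝ χ y (Pi.single k 1)
        = fderiv ℝ χ y (fun k => f (auxIns i s y) (i.succAbove k)) := by
      conv_rhs => rw [pi_eq_sum_univ' (fun k => f (auxIns i s y) (i.succAbove k))]
      rw [map_sum]
      refine Finset.sum_congr rfl fun k _ => ?_
      rw [map_smul, smul_eq_mul]
    rw [e]
    refine ((fderiv ℝ χ y).le_opNorm _).trans ?_
    refine mul_le_mul (hK y) ?_ (norm_nonneg _) hK0
    rw [pi_norm_le_iff_of_nonneg (norm_nonneg _)]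
    exact fun k => norm_le_pi_norm (f (auxIns i s y)) _
  have hnorm := aux_fubini_prod i hf.continuous.norm hc.norm
  have hG'int : Integrable G' := by
    have := (aux_fubini_prod i (h := fun x => fderiv ℝ f x (Pi.single i 1) i *
      χ (fun k => x (i.succAbove k))) ((hDc i i).mul (hχc.comp (by fun_prop))) (hDs i i).mul_right).1
    simpa only [auxIns_succ] using this
  have hlim : Filter.Tendsto G Filter.atBot (nhds 0) := by
    refine tendsto_const_nhds.congr' ?_
    filter_upwards [Filter.eventually_lt_atBot (-R')] with s hs
    have : ∀ y, f (auxIns i s y) = 0 := by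
      intro y
      by_contra hne
      have h1 := hR' (subset_tsupport _ hne)
      rw [mem_closedBall_zero_iff] at h1
      have h2 := (abs_le.1 ((auxIns_norm' i s y).trans h1)).1
      linarith
    simp [G, this]
  have hfin := integral_Iic_of_hasDerivAt_of_tendsto' (a := t) (fun s _ => hd s)
    hG'int.integrableOn hlim
  rw [sub_zero] at hfin
  change |G t| ≤ _
  rw [← hfin, ← Real.norm_eq_abs, ← hnorm.2, ← integral_const_mul]
  refine (norm_integral_le_integral_norm _).trans ?_
  refine (setIntegral_le_integral hG'int.norm (.of_forall fun _ => norm_nonneg _)).trans ?_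
  exact integral_mono hG'int.norm (hnorm.1.const_mul K) hG'3

/-- The slice estimate. -/
lemma aux_slice {m : ℕ} (i : Fin (m + 1)) {f φ : (Fin (m + 1) → ℝ) → (Fin (m + 1) → ℝ)}
    (hf : ContDiff ℝ 1 f) (hc : HasCompactSupport f)
    (hdiv : ∀ x, ∑ i, fderiv ℝ f x (Pi.single i 1) i = 0)
    (hφ : ContDiff ℝ 1 φ) (hcφ : HasCompactSupport φ) (hF : 0 < ∫ x, ‖f x‖) (t : ℝ) :
    |∫ y, f (auxIns i t y) i * φ (auxIns i t y) i| ≤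
      ((m : ℝ) + 2) * (∫ x, ‖f x‖) ^ (((m : ℝ) + 1)⁻¹) *
        ((∫ y, ‖f (auxIns i t y)‖) ^ (1 - ((m : ℝ) + 1)⁻¹) *
        (∫ y, ‖fderiv ℝ φ (auxIns i t y)‖ ^ ((m : ℝ) + 1)) ^ (((m : ℝ) + 1)⁻¹)) := by
  have hm1 : (0 : ℝ) < (m : ℝ) + 1 := by positivity
  set F := ∫ x, ‖f x‖ with hFdef
  set g := ∫ y, ‖f (auxIns i t y)‖ with hg
  set γ := ((m : ℝ) + 1)⁻¹ with hγ
  set ψ : (Fin m → ℝ) → ℝ := fun y => φ (auxIns i t y) i with hψdef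
  set A := (∫ y, ‖fderiv ℝ φ (auxIns i t y)‖ ^ ((m : ℝ) + 1)) ^ γ with hA
  have hA0 : 0 ≤ A := Real.rpow_nonneg (integral_nonneg fun z => by positivity) _
  have hg0 : 0 ≤ g := integral_nonneg fun z => norm_nonneg _
  have hfi : Continuous fun y => f (auxIns i t y) i := by
    have h1 := hf.continuous
    have h2 := auxIns_cont i t
    fun_prop
  have hfis : HasCompactSupport fun y => f (auxIns i t y) i :=
    aux_slice_supp i (hc.comp_left (g := fun v : Fin (m + 1) → ℝ => v i) (by simp)) t
  have hgi : Integrable fun y => ‖f (auxIns i t y)‖ :=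
    aux_slice_int i hf.continuous.norm hc.norm t
  have hψd : ContDiff ℝ 1 ψ := by
    have h2 : ContDiff ℝ 1 (auxIns i t) := contDiff_const.add (auxJ i).contDiff
    exact (contDiff_pi.1 (hφ.comp h2)) i
  have hψs : HasCompactSupport ψ :=
    aux_slice_supp i (hcφ.comp_left (g := fun v : Fin (m + 1) → ℝ => v i) (by simp)) t
  have hfdle : ∀ y, ‖fderiv ℝ ψ y‖ ≤ ‖fderiv ℝ φ (auxIns i t y)‖ := by
    intro y
    have h1 : HasFDerivAt ψ
          ((ContinuousLinearMap.proj (R := ℝ) (φ := fun _ : Fin (m + 1) => ℝ) i).comp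
            ((fderiv ℝ φ (auxIns i t y)).comp (auxJ i))) y :=
        (ContinuousLinearMap.proj (R := ℝ) (φ := fun _ : Fin (m + 1) => ℝ)
          i).hasFDerivAt.comp y ((hφ.differentiable (by simp) _).hasFDerivAt.comp y
            (auxIns_hasFDerivAt i t y))
    rw [h1.fderiv]
    refine ContinuousLinearMap.opNorm_le_bound _ (norm_nonneg _) fun v => ?_
    refine (norm_le_pi_norm (fderiv ℝ φ (auxIns i t y) (auxJ i v)) i).trans ?_
    refine ((fderiv ℝ φ (auxIns i t y)).le_opNorm _).trans ?_
    refine mul_le_mul_of_nonneg_left ?_ (norm_nonneg _)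
    refine ((auxJ i).le_opNorm v).trans ?_
    exact mul_le_of_le_one_left (norm_nonneg _) (auxJ_norm i)
  have hAle : (∫ y, ‖fderiv ℝ ψ y‖ ^ ((m : ℝ) + 1)) ^ γ ≤ A := by
    refine Real.rpow_le_rpow (integral_nonneg fun z => by positivity) ?_ (by positivity)
    refine integral_mono ?_ ?_ fun y => Real.rpow_le_rpow (norm_nonneg _) (hfdle y) hm1.le
    · refine Continuous.integrable_of_hasCompactSupport
        ((hψd.continuous_fderiv (by simp)).norm.rpow_const fun _ => Or.inr hm1.le) ?_
      exact (hψs.fderiv ℝ).comp_left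
        (g := fun L : (Fin m → ℝ) →L[ℝ] ℝ => ‖L‖ ^ ((m : ℝ) + 1)) (by simp [Real.zero_rpow hm1.ne'])
    · refine aux_slice_int i (h := fun x => ‖fderiv ℝ φ x‖ ^ ((m : ℝ) + 1))
        ((hφ.continuous_fderiv (by simp)).norm.rpow_const fun _ => Or.inr hm1.le) ?_ t
      exact (hcφ.fderiv ℝ).comp_left
        (g := fun L : (Fin (m + 1) → ℝ) →L[ℝ] (Fin (m + 1) → ℝ) => ‖L‖ ^ ((m : ℝ) + 1))
        (by simp [Real.zero_rpow hm1.ne'])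
  have key : ∀ ε : ℝ, 0 < ε → |∫ y, f (auxIns i t y) i * ψ y| ≤
      g * (((m : ℝ) + 1) * ε ^ γ * A) + ε ^ (γ - 1) * A * F := by
    intro ε hε
    obtain ⟨χ, hχ, hχ1, hχ2⟩ := aux_approx hψd hψs hε
    have i1 : Integrable fun y => f (auxIns i t y) i * (ψ y - χ y) :=
      (hfi.mul (hψd.continuous.sub hχ.continuous)).integrable_of_hasCompactSupport hfis.mul_right
    have i2 : Integrable fun y => f (auxIns i t y) i * χ y :=
      (hfi.mul hχ.continuous).integrable_of_hasCompactSupport hfis.mul_right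
    have e : ∫ y, f (auxIns i t y) i * ψ y = (∫ y, f (auxIns i t y) i * (ψ y - χ y)) +
        ∫ y, f (auxIns i t y) i * χ y := by
      rw [← integral_add i1 i2]
      refine integral_congr_ae (.of_forall fun y => ?_)
      simp only
      ring
    rw [e]
    refine (abs_add_le _ _).trans (add_le_add ?_ ?_)
    · rw [hg, ← integral_mul_const, ← Real.norm_eq_abs]
      refine norm_integral_le_of_norm_le (hgi.mul_const _) (.of_forall fun y => ?_)
      rw [norm_mul]
      refine mul_le_mul (norm_le_pi_norm _ i) ((hχ1 y).trans ?_) (norm_nonneg _) (norm_nonneg _)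
      exact mul_le_mul_of_nonneg_left hAle (by positivity)
    · exact aux_div i hf hc hdiv hχ (fun x => (hχ2 x).trans
        (mul_le_mul_of_nonneg_left hAle (by positivity))) t
  rcases hg0.eq_or_lt with h0 | hgpos
  · have hz : ∫ y, f (auxIns i t y) i * ψ y = 0 := by
      have h1 := (integral_eq_zero_iff_of_nonneg (fun y => norm_nonneg _) hgi).1 h0.symm
      refine integral_eq_zero_of_ae ?_
      filter_upwards [h1] with y hy
      have : f (auxIns i t y) = 0 := norm_eq_zero.1 hy
      simp [this]
    rw [hz, abs_zero]
    positivity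
  · refine (key (F / g) (by positivity)).trans (le_of_eq ?_)
    rw [Real.rpow_sub_one (by positivity), Real.div_rpow hF.le hg0, Real.rpow_sub hgpos,
      Real.rpow_one]
    have : 0 < g ^ γ := by positivity
    field_simp
    ring

lemma aux_component {m : ℕ} (i : Fin (m + 1)) {f φ : (Fin (m + 1) → ℝ) → (Fin (m + 1) → ℝ)}
    (hf : ContDiff ℝ 1 f) (hc : HasCompactSupport f)
    (hdiv : ∀ x, ∑ i, fderiv ℝ f x (Pi.single i 1) i = 0)
    (hφ : ContDiff ℝ 1 φ) (hcφ : HasCompactSupport φ) (hF : 0 < ∫ x, ‖f x‖) :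
    |∫ x, f x i * φ x i| ≤
      ((m : ℝ) + 2) * (∫ x, ‖f x‖) *
        (∫ x, ‖fderiv ℝ φ x‖ ^ ((m : ℝ) + 1)) ^ (((m : ℝ) + 1)⁻¹) := by
  have hm1 : (0 : ℝ) < (m : ℝ) + 1 := by positivity
  have hγ1 : ((m : ℝ) + 1)⁻¹ ≤ 1 :=
    inv_le_one_of_one_le₀ (by linarith [(Nat.cast_nonneg m : (0:ℝ) ≤ m)])
  have h1 := aux_fubini_prod i (h := fun x => f x i * φ x i)
    (by have := hf.continuous; have := hφ.continuous; fun_prop)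
    (HasCompactSupport.mul_right (hc.comp_left (g := fun v : Fin (m + 1) → ℝ => v i) (by simp)))
  have h2 := aux_fubini_prod i hf.continuous.norm hc.norm
  have h3 := aux_fubini_prod i (h := fun x => ‖fderiv ℝ φ x‖ ^ ((m : ℝ) + 1))
    ((hφ.continuous_fderiv (by simp)).norm.rpow_const fun _ => Or.inr hm1.le)
    ((hcφ.fderiv ℝ).comp_left
        (g := fun L : (Fin (m + 1) → ℝ) →L[ℝ] (Fin (m + 1) → ℝ) => ‖L‖ ^ ((m : ℝ) + 1))
        (by simp [Real.zero_rpow hm1.ne']))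
  have H := aux_holder h2.1 h3.1 (fun t => integral_nonneg fun z => norm_nonneg _)
    (fun t => integral_nonneg fun z => by positivity)
    (p := 1 - ((m : ℝ) + 1)⁻¹) (q := ((m : ℝ) + 1)⁻¹) (by linarith) (by positivity) (by ring)
  rw [← h1.2, ← Real.norm_eq_abs]
  refine (norm_integral_le_of_norm_le (H.1.const_mul _)
    (.of_forall fun t => aux_slice i hf hc hdiv hφ hcφ hF t)).trans ?_
  rw [integral_const_mul]
  refine (mul_le_mul_of_nonneg_left H.2 (by positivity)).trans (le_of_eq ?_)
  rw [h2.2, h3.2, Real.rpow_sub hF, Real.rpow_one]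
  have : 0 < (∫ x, ‖f x‖) ^ (((m : ℝ) + 1)⁻¹) := by positivity
  field_simp

/-- Bourgain–Brezis estimate for divergence-free `L¹` vector fields:
for `n ≥ 2` there is `C > 0` such that for every `f ∈ C_c^∞(ℝⁿ; ℝⁿ)` with
`div f = 0` and every `φ ∈ C_c^∞(ℝⁿ; ℝⁿ)`,
`|∫ f · φ| ≤ C ‖f‖_{L¹} ‖Dφ‖_{Lⁿ}`. -/
theorem stmt10 (n : ℕ) (hn : 2 ≤ n) :
    ∃ C : ℝ, 0 < C ∧
      ∀ f φ : (Fin n → ℝ) → (Fin n → ℝ),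
        ContDiff ℝ (⊤ : ℕ∞) f → HasCompactSupport f →
        (∀ x, ∑ i, fderiv ℝ f x (Pi.single i 1) i = 0) →
        ContDiff ℝ (⊤ : ℕ∞) φ → HasCompactSupport φ →
        |∫ x, ∑ i, f x i * φ x i| ≤
          C * (∫ x, ‖f x‖) * (∫ x, ‖fderiv ℝ φ x‖ ^ (n : ℝ)) ^ ((n : ℝ)⁻¹) := by
  obtain ⟨m, rfl⟩ : ∃ m, n = m + 1 := ⟨n - 1, by omega⟩
  refine ⟨((m : ℝ) + 1) * ((m : ℝ) + 2), by positivity, ?_⟩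
  intro f φ hf hc hdiv hφ hcφ
  have hf1 : ContDiff ℝ 1 f := hf.of_le (by exact_mod_cast le_top)
  have hφ1 : ContDiff ℝ 1 φ := hφ.of_le (by exact_mod_cast le_top)
  push_cast
  have hF0 : 0 ≤ ∫ x, ‖f x‖ := integral_nonneg fun z => norm_nonneg _
  rcases hF0.eq_or_lt with h0 | hF
  · have h1 := (integral_eq_zero_iff_of_nonneg (fun y => norm_nonneg _)
      (hf.continuous.norm.integrable_of_hasCompactSupport hc.norm)).1 h0.symm
    have hz : ∫ x, ∑ i, f x i * φ x i = 0 := by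
      refine integral_eq_zero_of_ae ?_
      filter_upwards [h1] with y hy
      have : f y = 0 := norm_eq_zero.1 hy
      simp [this]
    rw [hz, ← h0]
    simp
  · rw [integral_finsetSum]
    · refine (Finset.abs_sum_le_sum_abs _ _).trans ?_
      refine (Finset.sum_le_sum fun i _ =>
        aux_component i hf1 hc hdiv hφ1 hcφ hF).trans (le_of_eq ?_)
      simp
      ring
    · intro i _
      refine Continuous.integrable_of_hasCompactSupport
        (by have := hf.continuous; have := hφ.continuous; fun_prop)
        (HasCompactSupport.mul_right (hc.comp_left (g := fun v : Fin (m + 1) → ℝ => v i) (by simp)))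
end
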